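/- arXiv:1708.07639 — 3 statements merged into one kernel-verified Lean document; each statement's English description precedes it below -/
import Mathlib

section
/- The operator 𝒜 is maximal: for every (φ, ψ) ∈ V × H there exists (u, v) ∈ V × V such that u − v = φ and A u + g(v) + ι(j v) = ι(ψ) in V′ (in particular A u + g(v) ∈ ι(H), so (u,v) ∈ D(𝒜) and 𝒜(u,v) + (u,v) = (φ, ψ)). Equivalently, the continuous coercive monotone operator 𝒞 : V → V′, 𝒞 v = A v + g(v) + ι(j v), is surjective. -/
open scoped RealInnerProductSpace
open Set

lemma aux_lin {a c : ℝ} (hc : 0 ≤ c) (h : ∀ t : ℝ, 0 < t → t ≤ 1 → 0 ≤ t * a + t ^ 2 * c) :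
    0 ≤ a := by
  by_contra ha
  push Not at ha
  have hd : 0 < c - a := by linarith
  have h1 := h (-a / (c - a)) (div_pos (by linarith) hd) (by rw [div_le_one hd]; linarith)
  have h2 : -a / (c - a) * a + (-a / (c - a)) ^ 2 * c = a ^ 3 / (c - a) ^ 2 := by
    field_simp
    ring
  rw [h2] at h1
  have h3 : a ^ 3 / (c - a) ^ 2 < 0 :=
    div_neg_of_neg_of_pos (by have := mul_pos_of_neg_of_neg ha ha; nlinarith) (by positivity)
  linarith

lemma aux_finite {V : Type*} [NormedAddCommGroup V] [InnerProductSpace ℝ V]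
    {I : Type*} [Fintype I] [Nonempty I] (w b : I → V)
    (hm : ∀ i k, 0 ≤ ⟪b i - b k, w i - w k⟫) :
    ∃ x : V, ∀ i, ⟪b i + x, x - w i⟫ ≤ 0 := by
  classical
  let P : (I → ℝ) → V := fun l => ∑ i, l i • (w i - b i)
  let Q : (I → ℝ) → ℝ := fun l => ∑ i, l i * ⟪b i, w i⟫
  have hPc : Continuous P := by fun_prop
  have hQc : Continuous Q := by fun_prop
  obtain ⟨l, hl, hmax⟩ := (isCompact_stdSimplex ℝ I).exists_isMinOn
    ⟨_, single_mem_stdSimplex ℝ (Classical.arbitrary I)⟩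
    (f := fun l => (1/4) * ‖P l‖ ^ 2 + Q l) (by fun_prop)
  have hneg : 0 ≤ (1/4) * ‖P l‖ ^ 2 + Q l := by
    have hs : 0 ≤ ∑ i, ∑ k, l i * (l k * ⟪b i - b k, w i - w k⟫) :=
      Finset.sum_nonneg fun i _ => Finset.sum_nonneg fun k _ =>
        mul_nonneg (hl.1 i) (mul_nonneg (hl.1 k) (hm i k))
    set B := ∑ i, l i • b i with hB
    set W := ∑ i, l i • w i with hW
    have hP : P l = W - B := by
      simp only [P, smul_sub, Finset.sum_sub_distrib, hB, hW]
    have h1 : ∀ i, ∑ k, l k * ⟪b i - b k, w i - w k⟫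
        = ⟪b i, w i⟫ - ⟪b i, W⟫ - ⟪B, w i⟫ + Q l := by
      intro i
      have e1 : ⟪b i, W⟫ = ∑ k, l k * ⟪b i, w k⟫ := by
        simp [hW, inner_sum, real_inner_smul_right]
      have e2 : ⟪B, w i⟫ = ∑ k, l k * ⟪b k, w i⟫ := by
        simp [hB, sum_inner, real_inner_smul_left]
      have e3 : ⟪b i, w i⟫ = ∑ k, l k * ⟪b i, w i⟫ := by
        rw [← Finset.sum_mul, hl.2, one_mul]
      rw [e1, e2, e3, ← Finset.sum_sub_distrib, ← Finset.sum_sub_distrib,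
        ← Finset.sum_add_distrib]
      refine Finset.sum_congr rfl fun k _ => ?_
      simp only [inner_sub_left, inner_sub_right]
      ring
    have h2 : ∑ i, ∑ k, l i * (l k * ⟪b i - b k, w i - w k⟫) = 2 * (Q l - ⟪B, W⟫) := by
      have e1 : ⟪B, W⟫ = ∑ i, l i * ⟪b i, W⟫ := by
        simp [hB, sum_inner, real_inner_smul_left]
      have e2 : ⟪B, W⟫ = ∑ i, l i * ⟪B, w i⟫ := by
        conv_lhs => rw [hW]
        simp [inner_sum, real_inner_smul_right]
      have e3 : Q l = ∑ i, l i * Q l := by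
        rw [← Finset.sum_mul, hl.2, one_mul]
      calc _ = ∑ i, (l i * ⟪b i, w i⟫ - l i * ⟪b i, W⟫ - l i * ⟪B, w i⟫ + l i * Q l) := by
            refine Finset.sum_congr rfl fun i _ => ?_
            rw [← Finset.mul_sum, h1]; ring
        _ = Q l - ⟪B, W⟫ - ⟪B, W⟫ + Q l := by
            rw [Finset.sum_add_distrib, Finset.sum_sub_distrib, Finset.sum_sub_distrib,
              ← e1, ← e2, ← e3]
        _ = _ := by ring
    have h3 : ‖P l‖ ^ 2 = ‖W + B‖ ^ 2 - 4 * ⟪B, W⟫ := by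
      rw [hP, norm_sub_sq_real, norm_add_sq_real, real_inner_comm]; ring
    have := sq_nonneg ‖W + B‖
    rw [h3]
    linarith
  refine ⟨(1/2 : ℝ) • P l, fun k => ?_⟩
  have key : 0 ≤ (1/2) * ⟪P l, (w k - b k) - P l⟫ + (⟪b k, w k⟫ - Q l) := by
    refine aux_lin (c := (1/4) * ‖(w k - b k) - P l‖ ^ 2) (by positivity) fun t ht ht1 => ?_
    have hmem : (1 - t) • l + t • Pi.single k (1:ℝ) ∈ stdSimplex ℝ I :=
      convex_stdSimplex ℝ I hl (single_mem_stdSimplex ℝ k) (by linarith) ht.le (by ring)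
    have h := hmax hmem
    simp only [mem_setOf_eq] at h
    have hP : P ((1 - t) • l + t • Pi.single k (1:ℝ)) = P l + t • ((w k - b k) - P l) := by
      have : P ((1 - t) • l + t • Pi.single k (1:ℝ)) = (1 - t) • P l + t • (w k - b k) := by
        simp only [P, Pi.add_apply, Pi.smul_apply, add_smul, Finset.sum_add_distrib,
          smul_assoc, ← Finset.smul_sum]
        congr 2
        simp [Pi.single_apply]
      rw [this]; module
    have hQ : Q ((1 - t) • l + t • Pi.single k (1:ℝ)) = Q l + t * (⟪b k, w k⟫ - Q l) := by
      have : Q ((1 - t) • l + t • Pi.single k (1:ℝ)) = (1 - t) * Q l + t * ⟪b k, w k⟫ := by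
        simp only [Q, Pi.add_apply, Pi.smul_apply, add_mul, Finset.sum_add_distrib,
          smul_eq_mul, mul_assoc, ← Finset.mul_sum]
        congr 2
        simp [Pi.single_apply]
      rw [this]; ring
    rw [hP, hQ, norm_add_sq_real, real_inner_smul_right, norm_smul, mul_pow,
      Real.norm_eq_abs, sq_abs] at h
    linarith
  simp only [inner_sub_left, inner_sub_right, inner_add_left, real_inner_smul_left,
    real_inner_smul_right, real_inner_self_eq_norm_sq] at key ⊢
  have c1 := real_inner_comm (P l) (b k)
  have c2 : ‖(1/2 : ℝ) • P l‖ ^ 2 = (1/4) * ‖P l‖ ^ 2 := by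
    rw [norm_smul, mul_pow]; norm_num
  rw [c2]
  linarith

lemma aux_ball {V : Type*} [NormedAddCommGroup V] [InnerProductSpace ℝ V] (w b x : V) :
    ⟪b + x, x - w⟫ ≤ 0 ↔ ‖x - (1/2 : ℝ) • (w - b)‖ ≤ ‖(1/2 : ℝ) • (w + b)‖ := by
  rw [← sq_le_sq₀ (norm_nonneg _) (norm_nonneg _)]
  simp only [← real_inner_self_eq_norm_sq, inner_sub_left, inner_sub_right, inner_add_left,
    inner_add_right, real_inner_smul_left, real_inner_smul_right]
  rw [real_inner_comm w x, real_inner_comm w b, real_inner_comm b x]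
  constructor <;> intro h <;> linarith

lemma aux_debrunner {V : Type*} [NormedAddCommGroup V] [InnerProductSpace ℝ V] [CompleteSpace V]
    (b : V → V) (hm : ∀ v w, 0 ≤ ⟪b v - b w, v - w⟫) :
    ∃ x : V, ∀ w, ⟪b w + x, x - w⟫ ≤ 0 := by
  classical
  let D := InnerProductSpace.toDual ℝ V
  let C : V → Set (WeakDual ℝ V) := fun w => WeakDual.toStrongDual ⁻¹'
    Metric.closedBall (D ((1/2 : ℝ) • (w - b w))) ‖(1/2 : ℝ) • (w + b w)‖
  have hC : ∀ w x, StrongDual.toWeakDual (D x) ∈ C w ↔ ⟪b w + x, x - w⟫ ≤ 0 := by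
    intro w x
    rw [aux_ball]
    change D x ∈ Metric.closedBall (D _) _ ↔ _
    rw [Metric.mem_closedBall, D.dist_map, dist_eq_norm]
  obtain ⟨y, hy⟩ := (WeakDual.isCompact_closedBall (𝕜 := ℝ) (D ((1/2 : ℝ) • (0 - b 0)))
      ‖(1/2 : ℝ) • (0 + b 0)‖).inter_iInter_nonempty C
      (fun w => WeakDual.isClosed_closedBall _ _) (by
    intro u
    haveI : Nonempty (insert (0:V) u : Finset V) := ⟨⟨0, by simp⟩⟩
    obtain ⟨x, hx⟩ := aux_finite (I := (insert (0:V) u : Finset V)) (fun i => i.1)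
      (fun i => b i.1) (fun i k => hm _ _)
    refine ⟨StrongDual.toWeakDual (D x), (hC 0 x).2 (hx ⟨0, by simp⟩), ?_⟩
    simp only [mem_iInter]
    intro w hw
    exact (hC w x).2 (hx ⟨w, by simp [hw]⟩))
  refine ⟨D.symm (WeakDual.toStrongDual y), fun w => ?_⟩
  rw [← hC, D.apply_symm_apply]
  exact mem_iInter.1 hy.2 w

lemma aux_minty {V : Type*} [NormedAddCommGroup V] [InnerProductSpace ℝ V] [CompleteSpace V]
    (b : V → V) (hc : Continuous b) (hm : ∀ v w, 0 ≤ ⟪b v - b w, v - w⟫) :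
    ∃ x : V, b x + x = 0 := by
  obtain ⟨x, hx⟩ := aux_debrunner b hm
  refine ⟨x, ?_⟩
  set z := b x + x with hz
  have hlim : Filter.Tendsto (fun t : ℝ => ⟪b (x - t • z) + x, z⟫) (nhdsWithin 0 (Ioi 0))
      (nhds ⟪b (x - (0:ℝ) • z) + x, z⟫) := by
    have : Continuous (fun t : ℝ => ⟪b (x - t • z) + x, z⟫) := by fun_prop
    exact (this.tendsto 0).mono_left nhdsWithin_le_nhds
  have h := le_of_tendsto hlim (b := 0) (by
    filter_upwards [self_mem_nhdsWithin] with t ht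
    have h1 := hx (x - t • z)
    rw [sub_sub_cancel, real_inner_smul_right] at h1
    exact nonpos_of_mul_nonpos_right h1 ht)
  rw [zero_smul, sub_zero, ← hz] at h
  rw [real_inner_self_eq_norm_sq] at h
  exact norm_eq_zero.1 (pow_eq_zero_iff two_ne_zero |>.1 (le_antisymm h (sq_nonneg _)))

/-- Maximality of the operator 𝒜: the operator
`𝒞 v = A v + g v + ι (j v)` is surjective, i.e. for every `(φ, ψ) ∈ V × H`
there is `(u, v)` with `u - v = φ` and `A u + g v + ι (j v) = ι ψ`. -/
theorem stmt_1
    {V H : Type*}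
    [NormedAddCommGroup V] [InnerProductSpace ℝ V] [CompleteSpace V]
    [NormedAddCommGroup H] [InnerProductSpace ℝ H] [CompleteSpace H]
    (j : V →L[ℝ] H) (hj_inj : Function.Injective j) (hj_dense : DenseRange j)
    (ι : H → (V →L[ℝ] ℝ)) (hι : ∀ (w : H) (v : V), ι w v = ⟪w, j v⟫)
    (A : V → (V →L[ℝ] ℝ)) (hA : ∀ u v : V, A u v = ⟪u, v⟫)
    (g : V → (V →L[ℝ] ℝ)) (hg_cont : Continuous g)
    (hg_mono : ∀ v w : V, (g v - g w) (v - w) ≥ 0) :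
    ∀ (φ : V) (ψ : H), ∃ u v : V,
      u - v = φ ∧ A u + g v + ι (j v) = ι ψ := by
  intro φ ψ
  let b : V → V := fun w => (InnerProductSpace.toDual ℝ V).symm (g w)
    + (ContinuousLinearMap.adjoint j) (j w - ψ) + φ
  have hb : ∀ w z, ⟪b w, z⟫ = g w z + ⟪j w, j z⟫ - ⟪ψ, j z⟫ + ⟪φ, z⟫ := by
    intro w z
    simp only [b, inner_add_left, InnerProductSpace.toDual_symm_apply,
      ContinuousLinearMap.adjoint_inner_left, inner_sub_left]
    ring
  have hbc : Continuous b :=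
    (((InnerProductSpace.toDual ℝ V).symm.continuous.comp hg_cont).add
      (by fun_prop)).add continuous_const
  obtain ⟨x, hx⟩ := aux_minty b hbc (by
    intro v w
    have h1 := hg_mono v w
    have h2 : 0 ≤ ⟪j (v - w), j (v - w)⟫ := real_inner_self_nonneg
    rw [inner_sub_left, hb, hb]
    rw [ContinuousLinearMap.sub_apply] at h1
    nth_rewrite 1 [map_sub j] at h2
    rw [inner_sub_left] at h2
    linarith)
  refine ⟨φ + x, x, by abel, ?_⟩
  ext z
  have h := hb x z
  rw [eq_neg_of_add_eq_zero_left hx, inner_neg_left] at h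
  simp only [ContinuousLinearMap.add_apply, hA, hι, inner_add_left]
  linarith
end

section
/- Let α ≥ 0 and assume (P1): there exist γ > 0 and C₁ ≥ 0 such that ⟨g(v), v⟩ ≥ γ ‖e v‖_Z^{α+2} − C₁ for all v ∈ V; and (P2): there exist K > 0 and C₂ ≥ 0 such that ‖g(v)‖_{V′} ≤ C₂ + K ‖e v‖_Z^{α+1} for all v ∈ V. Then there exists a constant K′ > 0, depending only on V, H, Z, j, e, f, A, g, α and the constants γ, C₁, C₂, K (in particular independent of h and of the solution), such that for every continuous h : [0,∞) → H with ‖h‖_{S²} < ∞ and every strong solution u of ü + A u + g(u̇) = h, one has limsup_{t→∞} (|j u̇(t)|_H² + ‖u(t)‖_V²) ≤ K′ (1 + ‖h‖_{S²}²). -/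
open scoped RealInnerProductSpace
open Set Filter MeasureTheory intervalIntegral


theorem aux_mono (F F' : ℝ → ℝ) (hF : ∀ t, 0 ≤ t → HasDerivWithinAt F (F' t) (Ici 0) t)
    (a b : ℝ) (ha : 0 ≤ a) (hab : a ≤ b) (h : ∀ t, a ≤ t → t ≤ b → F' t ≤ 0) : F b ≤ F a := by
  have := antitoneOn_of_deriv_nonpos (D := Icc a b) (f := F) (convex_Icc a b) ?_ ?_ ?_
  · exact this (left_mem_Icc.2 hab) (right_mem_Icc.2 hab) hab
  · intro t ht
    exact (hF t (ha.trans ht.1)).continuousWithinAt.mono (fun x hx => ha.trans hx.1)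
  · rw [interior_Icc]
    intro t ht
    have h0 : 0 < t := ha.trans_lt ht.1
    exact ((hF t h0.le).hasDerivAt (Ici_mem_nhds h0)).differentiableAt.differentiableWithinAt
  · rw [interior_Icc]
    intro t ht
    have h0 : 0 < t := ha.trans_lt ht.1
    rw [((hF t h0.le).hasDerivAt (Ici_mem_nhds h0)).deriv]
    exact h t ht.1.le ht.2.le

/-- Pointwise bounds. -/
theorem aux_pt (α : ℝ) (hα : 0 ≤ α) (γ C₁ c : ℝ) (hγ : 0 < γ) (hC₁ : 0 ≤ C₁)
    (l : ℝ) (hl : 1 ≤ l) (z η E' : ℝ) (hz : 0 ≤ z)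
    (hE : E' ≤ c * η * z - γ * z ^ (α + 2) + C₁) :
    z ^ (α + 1) ≤ -(2 / γ / l) * E' +
      (2 + 2 / γ * C₁ + c ^ 2 / γ ^ 2) * (l ^ (α + 1) + η ^ 2 / l ^ (α + 1)) := by
  have hl0 : 0 < l := by linarith
  have hzα : 0 ≤ z ^ α := Real.rpow_nonneg hz _
  have hlα : 0 < l ^ α := Real.rpow_pos_of_pos hl0 _
  have hlα1 : 1 ≤ l ^ α := Real.one_le_rpow hl hα
  have e1 : z ^ (α + 1) = z ^ α * z := by
    rcases hz.eq_or_lt with h | h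
    · rw [← h, Real.zero_rpow (by linarith)]; ring
    · rw [Real.rpow_add h, Real.rpow_one]
  have e2 : z ^ (α + 2) = z ^ α * z ^ 2 := by
    rcases hz.eq_or_lt with h | h
    · rw [← h, Real.zero_rpow (by linarith)]; ring
    · rw [Real.rpow_add h, Real.rpow_two]
  have e3 : l ^ (α + 1) = l ^ α * l := by rw [Real.rpow_add hl0, Real.rpow_one]
  rw [e2] at hE
  rw [e1, e3]
  set p := z ^ α
  set q := l ^ α
  have k0 : (z ≤ l ∧ p ≤ q) ∨ (l ≤ z ∧ q ≤ p) := by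
    rcases le_total z l with h | h
    · exact Or.inl ⟨h, Real.rpow_le_rpow hz h hα⟩
    · exact Or.inr ⟨h, Real.rpow_le_rpow hl0.le h hα⟩
  have k1 : p * z * l ≤ p * z ^ 2 + q * l ^ 2 := by
    rcases k0 with ⟨h1, h2⟩ | ⟨h1, h2⟩
    · have : p * z * l ≤ q * l * l := by gcongr
      have : 0 ≤ p * z ^ 2 := by positivity
      nlinarith
    · have : p * z * l ≤ p * z * z := by gcongr
      have : 0 ≤ q * l ^ 2 := by positivity
      nlinarith
  have k2 : z ^ 2 * q ≤ p * z ^ 2 + q * l ^ 2 := by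
    rcases k0 with ⟨h1, h2⟩ | ⟨h1, h2⟩
    · have : z ^ 2 * q ≤ l ^ 2 * q := by gcongr
      have : 0 ≤ p * z ^ 2 := by positivity
      nlinarith
    · have : z ^ 2 * q ≤ z ^ 2 * p := by gcongr
      have : 0 ≤ q * l ^ 2 := by positivity
      nlinarith
  have k3 : c * η * z ≤ c ^ 2 * η ^ 2 / (2 * γ * q) + γ * (z ^ 2 * q) / 2 := by
    have : c ^ 2 * η ^ 2 / (2 * γ * q) + γ * (z ^ 2 * q) / 2 - c * η * z
      = (c * η - γ * q * z) ^ 2 / (2 * γ * q) := by field_simp; ring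
    have h2 : 0 ≤ (c * η - γ * q * z) ^ 2 / (2 * γ * q) := by positivity
    linarith
  have k4 : γ / 2 * (p * z ^ 2) ≤ - E' + C₁ + γ / 2 * (q * l ^ 2) + c ^ 2 * η ^ 2 / (2 * γ * q) := by
    nlinarith
  have k5 : p * z ^ 2 ≤ 2 / γ * (- E' + C₁ + γ / 2 * (q * l ^ 2) + c ^ 2 * η ^ 2 / (2 * γ * q)) := by
    have := mul_le_mul_of_nonneg_left k4 (show 0 ≤ 2 / γ by positivity)
    refine le_trans (le_of_eq ?_) this
    field_simp
  have k6 : p * z ≤ (2 / γ * (- E' + C₁ + γ / 2 * (q * l ^ 2) + c ^ 2 * η ^ 2 / (2 * γ * q))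
      + q * l ^ 2) / l := by
    rw [le_div_iff₀ hl0]; linarith
  refine k6.trans ?_
  have k7 : (2 / γ * (- E' + C₁ + γ / 2 * (q * l ^ 2) + c ^ 2 * η ^ 2 / (2 * γ * q))
      + q * l ^ 2) / l = -(2 / γ / l) * E' + 2 / γ * C₁ * (1 / l) + 2 * (q * l) +
        c ^ 2 / γ ^ 2 * (η ^ 2 / (q * l)) := by
    field_simp; ring
  rw [k7]
  have k8 : 1 / l ≤ q * l := by
    rw [div_le_iff₀ hl0]; nlinarith
  have k9 : 2 / γ * C₁ * (1 / l) ≤ 2 / γ * C₁ * (q * l) := by gcongr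
  have t1 : 0 ≤ η ^ 2 / (q * l) := by positivity
  have t2 : 0 ≤ 2 / γ * C₁ := by positivity
  have t3 : 0 ≤ c ^ 2 / γ ^ 2 := by positivity
  have t4 : 0 ≤ q * l := by positivity
  nlinarith [mul_nonneg t2 t1, mul_nonneg t3 t4]

theorem aux_pt2 (α : ℝ) (hα : 0 ≤ α) (γ C₁ c : ℝ) (hγ : 0 < γ) (hC₁ : 0 ≤ C₁)
    (z η E' : ℝ) (hz : 0 ≤ z)
    (hE : E' ≤ c * η * z - γ * z ^ (α + 2) + C₁) :
    z ^ 2 ≤ -(2 / γ) * E' + (2 + 2 / γ * C₁ + c ^ 2 / γ ^ 2) * (1 + η ^ 2) := by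
  have e2 : z ^ (α + 2) = z ^ α * z ^ 2 := by
    rcases hz.eq_or_lt with h | h
    · rw [← h, Real.zero_rpow (by linarith)]; ring
    · rw [Real.rpow_add h, Real.rpow_two]
  have hzα : 0 ≤ z ^ α := Real.rpow_nonneg hz _
  rw [e2] at hE
  have k2 : z ^ 2 ≤ z ^ α * z ^ 2 + 1 := by
    rcases le_total z 1 with h | h
    · have : z ^ 2 ≤ 1 := by nlinarith
      have : 0 ≤ z ^ α * z ^ 2 := by positivity
      linarith
    · have : 1 ≤ z ^ α := Real.one_le_rpow h hα
      nlinarith [sq_nonneg z]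
  set X := z ^ α * z ^ 2
  have k3 : c * η * z ≤ c ^ 2 * η ^ 2 / (2 * γ) + γ * (z ^ 2) / 2 := by
    have : c ^ 2 * η ^ 2 / (2 * γ) + γ * (z ^ 2) / 2 - c * η * z
      = (c * η - γ * z) ^ 2 / (2 * γ) := by field_simp; ring
    have h2 : 0 ≤ (c * η - γ * z) ^ 2 / (2 * γ) := by positivity
    linarith
  have k4 : γ / 2 * X ≤ - E' + C₁ + γ / 2 + c ^ 2 * η ^ 2 / (2 * γ) := by
    nlinarith
  have k5 : X ≤ 2 / γ * (- E' + C₁ + γ / 2 + c ^ 2 * η ^ 2 / (2 * γ)) := by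
    have := mul_le_mul_of_nonneg_left k4 (show 0 ≤ 2 / γ by positivity)
    refine le_trans (le_of_eq ?_) this
    field_simp
  have k7 : 2 / γ * (- E' + C₁ + γ / 2 + c ^ 2 * η ^ 2 / (2 * γ)) =
      -(2 / γ) * E' + 2 / γ * C₁ + 1 + c ^ 2 / γ ^ 2 * η ^ 2 := by
    field_simp
  have t2 : 0 ≤ 2 / γ * C₁ := by positivity
  have t3 : 0 ≤ c ^ 2 / γ ^ 2 := by positivity
  nlinarith [mul_nonneg t2 (sq_nonneg η), sq_nonneg η]

/-- One step. -/
theorem aux_step (a b d J a1 b1 a2 b2 : ℝ) (hd : 0 ≤ d) (hJ : 0 ≤ J)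
    (ha1 : 0 ≤ a1) (hb1 : 0 ≤ b1) (ha2 : 0 ≤ a2) (hb2 : 0 ≤ b2) (N : ℝ) (hN : J + 1 ≤ N)
    (m l : ℝ) (hm : 1 ≤ m) (hl : 1 ≤ l)
    (E E' P P' Q η n : ℝ → ℝ)
    (hE : ∀ t, 0 ≤ t → HasDerivWithinAt E (E' t) (Ici 0) t)
    (hP : ∀ t, 0 ≤ t → HasDerivWithinAt P (P' t) (Ici 0) t)
    (hQ : ∀ t, 0 ≤ t → HasDerivWithinAt Q (η t ^ 2) (Ici 0) t)
    (hE' : ∀ t, 0 ≤ t → E' t ≤ d * (1 + η t ^ 2))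
    (hPE : ∀ t, 0 ≤ t → |P t| ≤ J * E t)
    (hn : ∀ t, 0 ≤ t → 0 ≤ n t ∧ n t ^ 2 ≤ 2 * E t)
    (hP' : ∀ t, 0 ≤ t → P' t ≤ -2 * E t - a1 * E' t + b1 * (1 + η t ^ 2) +
      (-(a2 / l) * E' t + b2 * (m + η t ^ 2 / m)) * n t)
    (hpos : ∀ t, 0 ≤ t → 0 ≤ (-(a2 / l) * E' t + b2 * (m + η t ^ 2 / m)))
    (t : ℝ) (ht : 0 ≤ t) (hQN : Q (t + N) - Q t ≤ N * (m ^ 2 - 1)) :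
    (∀ s, t ≤ s → s ≤ t + N → E s ≤ E t + d * N * m ^ 2) ∧
    (E t - 1 ≤ E (t + N) →
      E t ≤ (J * d * N + 2 * N + 2 * d * N ^ 2 + a1 + b1 * N + d * N
        + (a2 + 2 * b2 * N) ^ 2 / 2) * m ^ 2) := by
  have hN0 : 0 < N := by linarith
  have hm0 : 0 < m := by linarith
  have hm2 : 1 ≤ m ^ 2 := by nlinarith
  have Qmono : ∀ s r, 0 ≤ s → s ≤ r → Q s ≤ Q r := by
    intro s r hs hsr
    have := aux_mono (fun x => - Q x) (fun x => - η x ^ 2) (fun x hx => (hQ x hx).neg) s r hs hsr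
      (fun x _ _ => by simp only [neg_nonpos]; positivity)
    simpa using this
  have hlin : ∀ k : ℝ, ∀ x, HasDerivWithinAt (fun x : ℝ => k * x) k (Ici 0) x := by
    intro k x
    simpa using ((hasDerivAt_id x).const_mul k).hasDerivWithinAt
  have Egr : ∀ s r, t ≤ s → s ≤ r → r ≤ t + N → E r ≤ E s + d * N * m ^ 2 := by
    intro s r hs hsr hr
    have := aux_mono (fun x => E x - (d * x + d * Q x)) (fun x => E' x - (d + d * η x ^ 2))
      (fun x hx => (hE x hx).sub ((hlin d x).add ((hQ x hx).const_mul d))) s r (ht.trans hs) hsr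
      (fun x h1 _ => by have := hE' x (by linarith); linarith)
    have q1 := Qmono t s ht hs
    have q2 := Qmono r (t + N) (by linarith) hr
    have : d * ((r - s) + (Q r - Q s)) ≤ d * (N * m ^ 2) := by
      gcongr
      linarith
    linarith
  refine ⟨fun s h1 h2 => Egr t s le_rfl h1 h2, fun hdrop => ?_⟩
  have hEt : 0 ≤ E t := by nlinarith [(hn t ht).2, sq_nonneg (n t)]
  set B := Real.sqrt (2 * (E t + d * N * m ^ 2)) with hB
  have hBnn : 0 ≤ B := Real.sqrt_nonneg _
  have hB2 : B ^ 2 = 2 * (E t + d * N * m ^ 2) := Real.sq_sqrt (by positivity)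
  have hnB : ∀ s, t ≤ s → s ≤ t + N → n s ≤ B := by
    intro s h1 h2
    apply Real.le_sqrt_of_sq_le
    have := (hn s (by linarith)).2
    have := Egr t s le_rfl h1 h2
    linarith
  set e0 := E t - 1 - d * N * m ^ 2 with he0
  have hlow : ∀ s, t ≤ s → s ≤ t + N → e0 ≤ E s := by
    intro s h1 h2
    have := Egr s (t + N) h1 h2 le_rfl
    linarith
  have key := aux_mono
    (fun x => P x + (a1 + a2 / l * B) * E x + (2 * e0 - b1 - b2 * B * m) * x
      + (- b1 - b2 * B / m) * Q x)
    (fun x => P' x + (a1 + a2 / l * B) * E' x + (2 * e0 - b1 - b2 * B * m)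
      + (- b1 - b2 * B / m) * η x ^ 2)
    (fun x hx => (((hP x hx).add ((hE x hx).const_mul _)).add (hlin _ x)).add
      ((hQ x hx).const_mul _)) t (t + N) ht (by linarith)
    (fun x h1 h2 => by
      have i1 := hP' x (by linarith)
      have i2 := mul_le_mul_of_nonneg_left (hnB x h1 h2) (hpos x (by linarith))
      have i3 := hlow x h1 h2
      have i4 : (-(a2 / l) * E' x + b2 * (m + η x ^ 2 / m)) * B =
        -(a2 / l * B) * E' x + b2 * B * m + b2 * B / m * η x ^ 2 := by ring
      linarith)
  have j1 := (abs_le.1 (hPE t ht)).2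
  have j2 := (abs_le.1 (hPE (t + N) (by linarith))).1
  have j3 := Egr t (t + N) le_rfl (by linarith) le_rfl
  have j3' := mul_le_mul_of_nonneg_left j3 hJ
  have hl0 : 0 < l := by linarith
  have ha2l : a2 / l ≤ a2 := div_le_self ha2 hl
  have ha2l0 : 0 ≤ a2 / l := by positivity
  have j4 : (a1 + a2 / l * B) * (E t - E (t + N)) ≤ (a1 + a2 * B) := by
    have : (a1 + a2 / l * B) * (E t - E (t + N)) ≤ (a1 + a2 / l * B) * 1 := by
      gcongr; linarith
    have : a2 / l * B ≤ a2 * B := by gcongr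
    linarith
  have j5 : (b1 + b2 * B / m) * (Q (t + N) - Q t) ≤ (b1 + b2 * B / m) * (N * (m ^ 2 - 1)) := by
    gcongr
  have j6 : (b1 + b2 * B / m) * (N * (m ^ 2 - 1)) ≤ b1 * N * m ^ 2 - b1 * N + b2 * B * N * m := by
    have h1 : (b1 + b2 * B / m) * (N * (m ^ 2 - 1)) =
      b1 * N * m ^ 2 - b1 * N + b2 * B * N * m - b2 * B * N / m := by
      field_simp; ring
    have h2 : 0 ≤ b2 * B * N / m := by positivity
    linarith
  -- combine
  have j7 : 2 * N * E t - 2 * J * E t ≤ J * (d * N * m ^ 2) + 2 * N * (1 + d * N * m ^ 2)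
      + a1 + a2 * B + b1 * N * m ^ 2 + 2 * b2 * B * N * m := by
    rw [he0] at key
    linarith
  have hBm : (a2 + 2 * b2 * N) * m * B ≤ B ^ 2 / 2 + (a2 + 2 * b2 * N) ^ 2 * m ^ 2 / 2 := by
    nlinarith [sq_nonneg ((a2 + 2 * b2 * N) * m - B)]
  have j8 : a2 * B ≤ a2 * B * m := le_mul_of_one_le_right (by positivity) hm
  have j9 : E t * 1 ≤ E t * (N - J) := mul_le_mul_of_nonneg_left (by linarith) hEt
  have j10 : a1 ≤ a1 * m ^ 2 := le_mul_of_one_le_right ha1 hm2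
  have j11 : 2 * N ≤ 2 * N * m ^ 2 := le_mul_of_one_le_right (by linarith) hm2
  rw [hB2] at hBm
  linarith

/-- The abstract scalar result. -/
theorem aux_main (α : ℝ) (hα : 0 ≤ α) (γ C₁ c K C₂ J : ℝ) (hγ : 0 < γ) (hC₁ : 0 ≤ C₁)
    (hK : 0 < K) (hC₂ : 0 ≤ C₂) (hJ : 0 ≤ J) :
    ∃ K' : ℝ, 0 < K' ∧ ∀ (M : ℝ), 0 ≤ M → ∀ (E E' P P' Q η n z : ℝ → ℝ),
      (∀ t, 0 ≤ t → HasDerivWithinAt E (E' t) (Ici 0) t) →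
      (∀ t, 0 ≤ t → HasDerivWithinAt P (P' t) (Ici 0) t) →
      (∀ t, 0 ≤ t → HasDerivWithinAt Q (η t ^ 2) (Ici 0) t) →
      (∀ t, 0 ≤ t → 0 ≤ z t) →
      (∀ t, 0 ≤ t → 0 ≤ η t) →
      (∀ t, 0 ≤ t → E' t ≤ c * η t * z t - γ * z t ^ (α + 2) + C₁) →
      (∀ t, 0 ≤ t → P' t ≤ 2 * c ^ 2 * z t ^ 2 - 2 * E t +
        (C₂ + K * z t ^ (α + 1) + J * η t) * n t) →
      (∀ t, 0 ≤ t → |P t| ≤ J * E t) →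
      (∀ t, 0 ≤ t → 0 ≤ n t ∧ n t ^ 2 ≤ 2 * E t) →
      (∀ t, 0 ≤ t → Q (t + 1) - Q t ≤ M) →
      ∀ᶠ t in atTop, E t ≤ K' * (1 + M) := by
  obtain ⟨N, hN⟩ := exists_nat_ge (J + 1)
  set a := 2 / γ with ha
  set b := 2 + 2 / γ * C₁ + c ^ 2 / γ ^ 2 with hb
  have ha0 : 0 < a := by positivity
  have hb0 : 0 < b := by positivity
  set d := b / a with hd
  have hd0 : 0 < d := by positivity
  set a1 := 2 * c ^ 2 * a with ha1
  set b1 := 2 * c ^ 2 * b with hb1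
  set a2 := K * a with ha2
  set b2 := C₂ + K * b + J with hb2
  have hN0 : (0 : ℝ) < N := by linarith
  set R := (J * d * N + 2 * N + 2 * d * N ^ 2 + a1 + b1 * N + d * N
        + (a2 + 2 * b2 * N) ^ 2 / 2) with hR
  have hR0 : 0 < R := by positivity
  clear_value R
  refine ⟨R + d * N + d * N, by positivity, ?_⟩
  intro M hM E E' P P' Q η n z hE hP hQ hz hη hE' hP' hPE hn hQ1
  set m := Real.sqrt (1 + M) with hmdef
  have hm2 : m ^ 2 = 1 + M := Real.sq_sqrt (by linarith)
  have hm : 1 ≤ m := by rw [hmdef]; exact Real.one_le_sqrt.2 (by linarith)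
  set l := m ^ (1 / (α + 1)) with hldef
  have hl : 1 ≤ l := Real.one_le_rpow hm (by positivity)
  have hlm : l ^ (α + 1) = m := by
    rw [hldef, ← Real.rpow_mul (by linarith), one_div, inv_mul_cancel₀ (by linarith), Real.rpow_one]
  have hm0 : 0 < m := by linarith
  have A1 : ∀ t, 0 ≤ t → z t ^ (α + 1) ≤ -(a / l) * E' t + b * (m + η t ^ 2 / m) := by
    intro t ht
    have := aux_pt α hα γ C₁ c hγ hC₁ l hl (z t) (η t) (E' t) (hz t ht) (hE' t ht)
    rw [hlm] at this
    exact this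
  have A2 : ∀ t, 0 ≤ t → z t ^ 2 ≤ - a * E' t + b * (1 + η t ^ 2) := fun t ht =>
    aux_pt2 α hα γ C₁ c hγ hC₁ (z t) (η t) (E' t) (hz t ht) (hE' t ht)
  have A3 : ∀ t, 0 ≤ t → E' t ≤ d * (1 + η t ^ 2) := by
    intro t ht
    have h1 := A2 t ht
    have h2 : a * E' t ≤ b * (1 + η t ^ 2) := by nlinarith [sq_nonneg (z t)]
    rw [hd, div_mul_eq_mul_div, le_div_iff₀ ha0]
    linarith
  have A4 : ∀ t, 0 ≤ t → C₂ + K * z t ^ (α + 1) + J * η t ≤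
      -(a2 / l) * E' t + b2 * (m + η t ^ 2 / m) := by
    intro t ht
    have h1 := mul_le_mul_of_nonneg_left (A1 t ht) hK.le
    have h0 : 0 ≤ η t ^ 2 / m := by positivity
    have h2 : η t ≤ m + η t ^ 2 / m := by
      have : m + η t ^ 2 / m - η t = ((m - η t) ^ 2 + m * η t) / m := by field_simp; ring
      have h3 : 0 ≤ ((m - η t) ^ 2 + m * η t) / m := by
        have := hη t ht
        positivity
      linarith
    have h4 : C₂ * 1 ≤ C₂ * (m + η t ^ 2 / m) := by gcongr; linarith
    have h5 : J * η t ≤ J * (m + η t ^ 2 / m) := by gcongr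
    have h6 : K * (-(a / l) * E' t + b * (m + η t ^ 2 / m)) =
      -(a2 / l) * E' t + K * b * (m + η t ^ 2 / m) := by rw [ha2]; ring
    rw [hb2]
    linarith
  have QN : ∀ t, 0 ≤ t → ∀ k : ℕ, Q (t + k) - Q t ≤ k * M := by
    intro t ht k
    induction k with
    | zero => simp
    | succ k ih =>
      have := hQ1 (t + k) (by positivity)
      push_cast
      rw [← add_assoc]
      linarith
  have step := fun t ht => aux_step a b d J a1 b1 a2 b2 hd0.le hJ (by positivity) (by positivity)
    (by positivity) (by positivity) N hN m l hm hl E E' P P' Q η n hE hP hQ A3 hPE hn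
    (by
      intro t ht
      have h1 := hP' t ht
      have h2 := mul_le_mul_of_nonneg_right (A4 t ht) (hn t ht).1
      have h3 := mul_le_mul_of_nonneg_left (A2 t ht) (show 0 ≤ 2 * c ^ 2 by positivity)
      have h4 : 2 * c ^ 2 * (-a * E' t + b * (1 + η t ^ 2)) =
        - a1 * E' t + b1 * (1 + η t ^ 2) := by rw [ha1, hb1]; ring
      linarith)
    (by
      intro t ht
      refine le_trans ?_ (A4 t ht)
      have := hη t ht
      have := Real.rpow_nonneg (hz t ht) (α + 1)
      positivity)
    t ht (by rw [hm2]; have := QN t ht N; linarith)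
  simp only [← hR] at step
  clear hR
  clear_value d a1 b1 a2 b2 m l a b
  have step2 : ∀ t, 0 ≤ t → E (t + N) ≤ max (E t - 1) ((R + d * N) * m ^ 2) := by
    intro t ht
    obtain ⟨s1, s2⟩ := step t ht
    by_cases h : E t - 1 ≤ E (t + N)
    · apply le_max_of_le_right
      have := s2 h
      have := s1 (t + N) (by linarith) le_rfl
      linarith
    · exact le_max_of_le_left (not_le.1 h).le
  have step3 : ∀ k : ℕ, E (k * N) ≤ max (E 0 - k) ((R + d * N) * m ^ 2) := by
    intro k
    induction k with
    | zero => simp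
    | succ k ih =>
      have := step2 (k * N) (by positivity)
      push_cast
      rw [add_mul, one_mul]
      refine this.trans (max_le ?_ (le_max_right _ _))
      rcases le_max_iff.1 ih with h | h
      · apply le_max_of_le_left; linarith
      · apply le_max_of_le_right; linarith
  obtain ⟨k0, hk0⟩ := exists_nat_ge (E 0)
  rw [eventually_atTop]
  refine ⟨k0 * N, fun t ht => ?_⟩
  have ht0 : 0 ≤ t := le_trans (by positivity) ht
  set k := ⌊t / N⌋₊ with hk
  have f1 : (k : ℝ) * N ≤ t := by
    have := Nat.floor_le (show 0 ≤ t / N by positivity)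
    rwa [le_div_iff₀ hN0] at this
  have f2 : t ≤ k * N + N := by
    have := (Nat.lt_floor_add_one (t / N)).le
    rw [div_le_iff₀ hN0] at this
    linarith
  have f3 : (k0 : ℝ) ≤ k := by
    have : k0 ≤ k := Nat.le_floor (by rwa [le_div_iff₀ hN0])
    exact_mod_cast this
  have f4 := (step (k * N) (by positivity)).1 t f1 f2
  have f5 : E (k * N) ≤ (R + d * N) * m ^ 2 := by
    refine (step3 k).trans (max_le ?_ le_rfl)
    have : 0 ≤ (R + d * N) * m ^ 2 := by positivity
    linarith
  rw [← hm2]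
  linarith

/-- Power-like damping. Under (P1) and (P2) (with the
intermediate space `Z`) there is a constant `K'` depending only on the data
(not on `h` nor on the solution) such that every strong solution satisfies
`limsup_{t→∞} (|j u̇(t)|² + ‖u(t)‖²) ≤ K' (1 + ‖h‖_{S²}²)`. -/
theorem stmt_7
    {V H Z : Type*}
    [NormedAddCommGroup V] [InnerProductSpace ℝ V] [CompleteSpace V]
    [NormedAddCommGroup H] [InnerProductSpace ℝ H] [CompleteSpace H]
    [NormedAddCommGroup Z] [NormedSpace ℝ Z] [CompleteSpace Z]
    (j : V →L[ℝ] H) (hj_inj : Function.Injective j) (hj_dense : DenseRange j)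
    (e : V →L[ℝ] Z) (he_inj : Function.Injective e)
    (f : Z →L[ℝ] H) (hf_inj : Function.Injective f)
    (hfe : ∀ v : V, f (e v) = j v)
    (ι : H → (V →L[ℝ] ℝ)) (hι : ∀ (w : H) (v : V), ι w v = ⟪w, j v⟫)
    (A : V → (V →L[ℝ] ℝ)) (hA : ∀ u v : V, A u v = ⟪u, v⟫)
    (g : V → (V →L[ℝ] ℝ)) (hg_cont : Continuous g)
    (hg_mono : ∀ v w : V, (g v - g w) (v - w) ≥ 0)
    (α : ℝ) (hα : 0 ≤ α)
    (γ C₁ : ℝ) (hγ : 0 < γ) (hC₁ : 0 ≤ C₁)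
    (hP1 : ∀ v : V, g v v ≥ γ * ‖e v‖ ^ (α + 2) - C₁)
    (K C₂ : ℝ) (hK : 0 < K) (hC₂ : 0 ≤ C₂)
    (hP2 : ∀ v : V, ‖g v‖ ≤ C₂ + K * ‖e v‖ ^ (α + 1)) :
    ∃ K' : ℝ, 0 < K' ∧
      ∀ h : ℝ → H, ContinuousOn h (Ici 0) →
        BddAbove {x : ℝ | ∃ t : ℝ, 0 ≤ t ∧ x = ∫ s in t..(t + 1), ‖h s‖ ^ 2} →
        ∀ (u u' : ℝ → V) (u'' : ℝ → H),
          (∀ t ∈ Ici (0 : ℝ), HasDerivWithinAt u (u' t) (Ici 0) t) →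
          ContinuousOn u' (Ici 0) →
          (∀ t ∈ Ici (0 : ℝ), HasDerivWithinAt (fun s => j (u' s)) (u'' t) (Ici 0) t) →
          ContinuousOn u'' (Ici 0) →
          (∀ t ∈ Ici (0 : ℝ), ι (u'' t) + A (u t) + g (u' t) = ι (h t)) →
          limsup (fun t : ℝ => ‖j (u' t)‖ ^ 2 + ‖u t‖ ^ 2) atTop ≤
            K' * (1 + Real.sqrt
              (sSup {x : ℝ | ∃ t : ℝ, 0 ≤ t ∧ x = ∫ s in t..(t + 1), ‖h s‖ ^ 2}) ^ 2) := by
  obtain ⟨K', hK', main⟩ := aux_main α hα γ C₁ ‖f‖ K C₂ ‖j‖ hγ hC₁ hK hC₂ (norm_nonneg _)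
  refine ⟨2 * K', by positivity, ?_⟩
  intro h hh hbdd u u' u'' hu hu'c hu' hu''c heq
  set S := {x : ℝ | ∃ t : ℝ, 0 ≤ t ∧ x = ∫ s in t..(t + 1), ‖h s‖ ^ 2} with hS
  have hM0 : 0 ≤ sSup S := by
    apply Real.sSup_nonneg
    rintro x ⟨t, ht, rfl⟩
    exact integral_nonneg (by linarith) (fun _ _ => by positivity)
  rw [Real.sq_sqrt hM0]
  have hht : Continuous (fun s : ℝ => ‖h (max s 0)‖ ^ 2) := by
    have : Continuous (fun s : ℝ => h (max s 0)) :=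
      hh.comp_continuous (by fun_prop) (fun x => mem_Ici.2 (le_max_right _ _))
    exact this.norm.pow 2
  have hju : ∀ v, ‖j v‖ ≤ ‖f‖ * ‖e v‖ := fun v => by
    rw [← hfe v]; exact f.le_opNorm _
  have hjj : ∀ v, ‖j v‖ ≤ ‖j‖ * ‖v‖ := fun v => j.le_opNorm _
  have heq' : ∀ t, 0 ≤ t → ∀ v, ⟪u'' t, j v⟫ = ⟪h t, j v⟫ - ⟪u t, v⟫ - g (u' t) v := by
    intro t ht v
    have := congrArg (fun F : V →L[ℝ] ℝ => F v) (heq t ht)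
    simp only [add_apply, hι, hA] at this
    linarith
  have ev := main (sSup S) hM0
    (fun t => (‖j (u' t)‖ ^ 2 + ‖u t‖ ^ 2) / 2)
    (fun t => ⟪h t, j (u' t)⟫ - g (u' t) (u' t))
    (fun t => ⟪j (u' t), j (u t)⟫)
    (fun t => ⟪j (u' t), j (u' t)⟫ + ⟪u'' t, j (u t)⟫)
    (fun t => ∫ s in (0:ℝ)..t, ‖h (max s 0)‖ ^ 2)
    (fun t => ‖h t‖) (fun t => ‖u t‖) (fun t => ‖e (u' t)‖)
    ?_ ?_ ?_ (fun _ _ => norm_nonneg _) (fun _ _ => norm_nonneg _) ?_ ?_ ?_ ?_ ?_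
  · refine limsup_le_of_le ?_ ?_
    · refine isCoboundedUnder_le_of_le atTop (x := 0) (fun t => by positivity)
    · filter_upwards [ev] with t ht
      linarith
  · intro t ht
    have := (((hu' t ht).norm_sq).add ((hu t ht).norm_sq)).div_const 2
    refine this.congr_deriv ?_
    rw [real_inner_comm, heq' t ht]
    ring
  · intro t ht
    exact (hu' t ht).inner ℝ (j.hasFDerivAt.comp_hasDerivWithinAt t (hu t ht))
  · intro t ht
    have := (hht.integral_hasStrictDerivAt 0 t).hasDerivAt.hasDerivWithinAt (s := Ici 0)
    simpa [max_eq_left ht] using this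
  · intro t ht
    have h1 := hP1 (u' t)
    have h2 := real_inner_le_norm (h t) (j (u' t))
    have h3 := mul_le_mul_of_nonneg_left (hju (u' t)) (norm_nonneg (h t))
    nlinarith
  · intro t ht
    rw [heq' t ht (u t), real_inner_self_eq_norm_sq, real_inner_self_eq_norm_sq]
    have h1 := real_inner_le_norm (h t) (j (u t))
    have h2 := mul_le_mul_of_nonneg_left (hjj (u t)) (norm_nonneg (h t))
    have h3 : -(g (u' t) (u t)) ≤ ‖g (u' t)‖ * ‖u t‖ :=
      (neg_le_abs _).trans ((g (u' t)).le_opNorm _)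
    have h4 := mul_le_mul_of_nonneg_right (hP2 (u' t)) (norm_nonneg (u t))
    have h5 : ‖j (u' t)‖ ^ 2 ≤ ‖f‖ ^ 2 * ‖e (u' t)‖ ^ 2 := by
      rw [← mul_pow]
      exact pow_le_pow_left₀ (norm_nonneg _) (hju _) 2
    linarith
  · intro t ht
    have h1 := abs_real_inner_le_norm (j (u' t)) (j (u t))
    have h2 := mul_le_mul_of_nonneg_left (hjj (u t)) (norm_nonneg (j (u' t)))
    have h3 : ‖j‖ * (‖j (u' t)‖ * ‖u t‖) ≤ ‖j‖ * ((‖j (u' t)‖ ^ 2 + ‖u t‖ ^ 2) / 2) := by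
      gcongr
      nlinarith [sq_nonneg (‖j (u' t)‖ - ‖u t‖)]
    linarith
  · intro t ht
    refine ⟨norm_nonneg _, ?_⟩
    nlinarith [sq_nonneg ‖j (u' t)‖]
  · intro t ht
    rw [integral_interval_sub_left (hht.intervalIntegrable _ _) (hht.intervalIntegrable _ _)]
    refine le_csSup hbdd ⟨t, ht, ?_⟩
    apply integral_congr
    intro s hs
    rw [uIcc_of_le (by linarith)] at hs
    show ‖h (max s 0)‖ ^ 2 = ‖h s‖ ^ 2
    rw [max_eq_left (ht.trans hs.1)]
end

section
/- Let α ≥ 0 and c > 0, and define g : V → V′ by g(v) = c |j v|_H^α · ι(j v) (the averaged damping of Example 2, with Z = H). Then g is continuous and monotone, satisfies ⟨g(v), v⟩ = c |j v|_H^{α+2} and ‖g(v)‖_{V′} ≤ c P |j v|_H^{α+1} (where P is the norm of j), and there exists a constant K′ > 0, independent of h and of the solution, such that for every continuous h : [0,∞) → H with ‖h‖_{S²} < ∞, every strong solution u of ü + A u + g(u̇) = h satisfies limsup_{t→∞} (|j u̇(t)|_H² + ‖u(t)‖_V²) ≤ K′ (1 + ‖h‖_{S²}²). -/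
open scoped RealInnerProductSpace
open Set Filter MeasureTheory intervalIntegral

lemma aux_int (W W' η : ℝ → ℝ) (p q R2 a b : ℝ) (ha : 0 ≤ a) (hab : a ≤ b) (hb : b ≤ a + 1)
    (hp : 0 ≤ p) (hq : 0 ≤ q)
    (hη : ContinuousOn η (Ici 0)) (hηR : ∀ t, 0 ≤ t → ∫ s in t..(t+1), η s ^ 2 ≤ R2)
    (hW : ContinuousOn W (Ici 0)) (hd : ∀ x, 0 < x → HasDerivAt W (W' x) x)
    (hle : ∀ x ∈ Ioo a b, W' x ≤ p + q * η x ^ 2) : W b - W a ≤ p + q * R2 := by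
  have hsub : ∀ y, Icc a y ⊆ Ici (0:ℝ) := fun y x hx => le_trans ha hx.1
  have hc2 : ContinuousOn (fun x => η x ^ 2) (Ici 0) := hη.pow 2
  have hi : ∀ y, a ≤ y → IntervalIntegrable (fun x => η x ^ 2) volume a y := fun y hy =>
    ((hc2.mono (hsub y)).intervalIntegrable_of_Icc hy)
  have h1 : W b - W a ≤ ∫ y in a..b, (p + q * η y ^ 2) := by
    apply sub_le_integral_of_hasDeriv_right_of_le hab (hW.mono (hsub b))
      (g' := W') (φ := fun y => p + q * η y ^ 2)
    · intro x hx
      exact (hd x (lt_of_le_of_lt ha hx.1)).hasDerivWithinAt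
    · apply ContinuousOn.integrableOn_Icc
      exact (continuousOn_const.add (continuousOn_const.mul (hc2.mono (hsub b))))
    · exact hle
  have h2 : ∫ y in a..b, (p + q * η y ^ 2) = (b - a) * p + q * ∫ y in a..b, η y ^ 2 := by
    rw [intervalIntegral.integral_add intervalIntegrable_const ((hi b hab).const_mul q)]
    simp
  have h3 : ∫ y in a..b, η y ^ 2 ≤ ∫ y in a..(a+1), η y ^ 2 := by
    apply intervalIntegral.integral_mono_interval le_rfl hab hb
    · exact Eventually.of_forall fun x => by positivity
    · exact hi _ (by linarith)
  have h4 := hηR a ha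
  have h5 : q * ∫ y in a..b, η y ^ 2 ≤ q * R2 := mul_le_mul_of_nonneg_left (h3.trans h4) hq
  nlinarith

/-- pointwise power inequalities -/
lemma aux_pow (α a ρ R : ℝ) (hα : 0 ≤ α) (ha : 0 ≤ a) (hρ : 1 ≤ ρ) (hR : ρ ^ (α + 1) = R) :
    a ≤ ρ + a ^ (α + 2) / R ∧ a ^ 2 ≤ ρ ^ 2 + ρ * a ^ (α + 2) / R ∧
    a ^ (α + 1) ≤ R + a ^ (α + 2) / ρ ∧ R / ρ * a ^ 2 ≤ a ^ (α + 2) + ρ * R := by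
  have hρ0 : 0 < ρ := by linarith
  have hR0 : 0 < R := hR ▸ Real.rpow_pos_of_pos hρ0 _
  have e1 : a ^ (α + 2) = a ^ (α + 1) * a := by
    rw [show α + 2 = (α + 1) + 1 by ring, Real.rpow_add_one' ha (by linarith)]
  have hw : 0 ≤ a ^ (α + 1) := Real.rpow_nonneg ha _
  rw [e1]
  set z := a ^ (α + 1) with hz
  rcases le_total a ρ with h | h
  · have hzR : z ≤ R := by
      rw [← hR]; exact Real.rpow_le_rpow ha h (by linarith)
    have : 0 ≤ z * a / R := by positivity
    have : 0 ≤ ρ * (z * a) / R := by positivity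
    have : 0 ≤ z * a / ρ := by positivity
    have : 0 ≤ z * a := by positivity
    refine ⟨by linarith, by nlinarith, by linarith, ?_⟩
    have : R / ρ * a ^ 2 ≤ R / ρ * ρ ^ 2 := by gcongr
    have e : R / ρ * ρ ^ 2 = ρ * R := by field_simp
    linarith
  · have hzR : R ≤ z := by
      rw [← hR]; exact Real.rpow_le_rpow hρ0.le h (by linarith)
    have ha0 : 0 < a := by linarith
    -- a^α ≥ ρ^α, i.e. z ρ ≥ R a
    have hk : R * a ≤ z * ρ := by
      have e2 : z = a ^ α * a := by rw [hz, Real.rpow_add_one' ha (by linarith)]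
      have e3 : R = ρ ^ α * ρ := by rw [← hR, Real.rpow_add_one' hρ0.le (by linarith)]
      have : ρ ^ α ≤ a ^ α := Real.rpow_le_rpow hρ0.le h hα
      rw [e2, e3]
      nlinarith [mul_le_mul_of_nonneg_right this (mul_pos hρ0 ha0).le]
    refine ⟨?_, ?_, ?_, ?_⟩
    · have : a ≤ z * a / R := by rw [le_div_iff₀ hR0]; nlinarith
      linarith
    · have : a ^ 2 ≤ ρ * (z * a) / R := by rw [le_div_iff₀ hR0]; nlinarith
      nlinarith
    · have : z ≤ z * a / ρ := by rw [le_div_iff₀ hρ0]; nlinarith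
      linarith
    · have : R / ρ * a ^ 2 ≤ z * a := by
        rw [div_mul_eq_mul_div, div_le_iff₀ hρ0]; nlinarith
      nlinarith [mul_pos hρ0 hR0]

set_option maxHeartbeats 2000000 in
lemma aux_window (α c P : ℝ) (hα : 0 ≤ α) (hc : 0 < c) (hP : 0 ≤ P) :
    ∃ C1 C : ℝ, 0 ≤ C1 ∧ 0 ≤ C ∧ ∀ (a n η E E' Q Q' : ℝ → ℝ) (R : ℝ), 1 ≤ R →
      (∀ x, 0 ≤ a x) → (∀ x, 0 ≤ n x) → (∀ x, 0 ≤ η x) → (∀ x, E x = (a x ^ 2 + n x ^ 2) / 2) →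
      ContinuousOn η (Ici 0) → ContinuousOn E (Ici 0) → ContinuousOn Q (Ici 0) →
      (∀ t, 0 ≤ t → ∫ s in t..(t+1), η s ^ 2 ≤ R ^ 2) →
      (∀ x, 0 < x → HasDerivAt E (E' x) x) → (∀ x, 0 < x → HasDerivAt Q (Q' x) x) →
      (∀ x, 0 < x → E' x ≤ - c * a x ^ (α + 2) + η x * a x) →
      (∀ x, 0 < x → Q' x ≤ a x ^ 2 - n x ^ 2 + c * P * a x ^ (α + 1) * n x + P * η x * n x) →
      (∀ x, |Q x| ≤ P * a x * n x) →
      ∀ t, 0 ≤ t → (∀ s ∈ Icc t (t + 1), E s ≤ E t + C1 * R ^ 2) ∧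
        (E t - 1 ≤ E (t + 1) → E t ≤ C * R ^ 2) := by
  set C1 := c / 2 + 1 / (2 * c) with hC1
  set κ := 1 + 1 / c ^ 2 + 2 / c with hκ
  set C5 := P * ((1 + c) * (1 + κ) + 1) with hC5
  set C6 := 2 * (1 + κ) with hC6
  have hC10 : 0 < C1 := by positivity
  have hκ0 : 0 < κ := by positivity
  have hC50 : 0 ≤ C5 := by positivity
  have hC60 : 0 < C6 := by positivity
  refine ⟨C1, 6 * ((1 + C1) / 3 + C1 / 6 + 3 * C5 ^ 2 + C6), hC10.le, by positivity, ?_⟩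
  intro a n η E E' Q Q' R hR1 ha hn hη0 hE hηc hEc hQc hηR hE' hQ' hEle hQle hQb t ht
  have hR0 : 0 < R := by linarith
  obtain ⟨ρ, hρ1, hρR⟩ : ∃ ρ : ℝ, 1 ≤ ρ ∧ ρ ^ (α + 1) = R := by
    refine ⟨R ^ (1 / (α + 1)), Real.one_le_rpow hR1 (by positivity), ?_⟩
    rw [← Real.rpow_mul hR0.le, one_div, inv_mul_cancel₀ (by linarith), Real.rpow_one]
  have hρ0 : 0 < ρ := by linarith
  have hρleR : ρ ≤ R := by
    rw [← hρR]; exact Real.self_le_rpow_of_one_le hρ1 (by linarith)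
  -- pointwise energy inequality
  have hpE : ∀ x, 0 < x → E' x ≤ - (c / 2) * a x ^ (α + 2) + (c / 2 * (ρ * R)
      + ρ / (2 * c * R) * η x ^ 2) := by
    intro x hx
    have h1 := hEle x hx
    obtain ⟨-, -, -, h4⟩ := aux_pow α (a x) ρ R hα (ha x) hρ1 hρR
    have h5 : η x * a x ≤ c / 2 * (R / ρ * a x ^ 2) + ρ / (2 * c * R) * η x ^ 2 := by
      have : c / 2 * (R / ρ * a x ^ 2) + ρ / (2 * c * R) * η x ^ 2 - η x * a x
          = (c * R * a x - ρ * η x) ^ 2 / (2 * c * R * ρ) := by field_simp; ring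
      have : 0 ≤ (c * R * a x - ρ * η x) ^ 2 / (2 * c * R * ρ) := by positivity
      linarith
    have h6 := mul_le_mul_of_nonneg_left h4 (by positivity : 0 ≤ c / 2)
    linarith
  have hw0 : ∀ x, 0 ≤ a x ^ (α + 2) := fun x => Real.rpow_nonneg (ha x) _
  have hEE : ∀ b d, 0 ≤ b → b ≤ d → d ≤ b + 1 → E d - E b ≤ C1 * (ρ * R) := by
    intro b d hb hbd hd
    have := aux_int E E' η (c / 2 * (ρ * R)) (ρ / (2 * c * R)) (R ^ 2) b d hb hbd hd
      (by positivity) (by positivity) hηc hηR hEc hE' (by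
        intro x hx
        have := hpE x (lt_of_le_of_lt hb hx.1)
        nlinarith [hw0 x])
    have e : c / 2 * (ρ * R) + ρ / (2 * c * R) * R ^ 2 = C1 * (ρ * R) := by
      rw [hC1]; field_simp
    linarith
  have hρRR : ρ * R ≤ R ^ 2 := by nlinarith
  have hρR2 : C1 * (ρ * R) ≤ C1 * R ^ 2 := mul_le_mul_of_nonneg_left hρRR hC10.le
  have hup : ∀ s ∈ Icc t (t + 1), E s ≤ E t + C1 * R ^ 2 := by
    intro s hs
    have := hEE t s ht hs.1 hs.2
    linarith
  refine ⟨hup, fun hdrop => ?_⟩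
  have hR21 : 1 ≤ R ^ 2 := by nlinarith
  set e := E t - (1 + C1) * R ^ 2 with he
  have hlow : ∀ s ∈ Icc t (t + 1), e ≤ E s := by
    intro s hs
    have := hEE s (t + 1) (ht.trans hs.1) hs.2 (by linarith [hs.1])
    rw [he]; nlinarith
  set m := Real.sqrt (2 * (E t + C1 * R ^ 2)) with hm
  have hm0 : 0 ≤ m := Real.sqrt_nonneg _
  have hEt : 0 ≤ E t := by rw [hE]; positivity
  have hm2 : m ^ 2 = 2 * (E t + C1 * R ^ 2) := Real.sq_sqrt (by positivity)
  have hnm : ∀ s ∈ Icc t (t + 1), n s ≤ m := by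
    intro s hs
    apply Real.le_sqrt_of_sq_le
    have h1 := hup s hs
    rw [hE s] at h1
    nlinarith [sq_nonneg (a s)]
  set k1 := P * m / R + 2 * ρ / R + c * P * m / ρ with hk1
  have hk10 : 0 ≤ k1 := by positivity
  let φ : ℝ → ℝ := fun x => (x - t) * (t + 1 - x)
  let Φ : ℝ → ℝ := fun x => (x - t) ^ 2 / 2 - (x - t) ^ 3 / 3
  have hφd : ∀ x, HasDerivAt φ (1 - 2 * (x - t)) x := by
    intro x
    have := ((hasDerivAt_id x).sub_const t).mul ((hasDerivAt_id x).const_sub (t + 1))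
    refine this.congr_deriv ?_
    simp; ring
  have hΦd : ∀ x, HasDerivAt Φ (φ x) x := by
    intro x
    have := ((((hasDerivAt_id x).sub_const t).pow 2).div_const 2).sub
      ((((hasDerivAt_id x).sub_const t).pow 3).div_const 3)
    refine this.congr_deriv ?_
    simp [φ]; ring
  have key := aux_int (fun x => φ x * Q x + 2 * e * Φ x + k1 * (2 / c) * E x)
    (fun x => ((1 - 2 * (x - t)) * Q x + φ x * Q' x) + 2 * e * φ x + k1 * (2 / c) * E' x) η
    (P * m * ρ + 2 * ρ ^ 2 + c * P * m * R + P * m * (R / 2) + k1 * (ρ * R))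
    (P * m / (2 * R) + k1 * (ρ / (c ^ 2 * R))) (R ^ 2) t (t + 1) ht (by linarith) le_rfl
    (by positivity) (by positivity) hηc hηR
    (by
      have h1 : Continuous φ := by fun_prop
      have h2 : Continuous Φ := by fun_prop
      exact ((h1.continuousOn.mul hQc).add (continuousOn_const.mul h2.continuousOn)).add
        (continuousOn_const.mul hEc))
    (by
      intro x hx
      exact (((hφd x).mul (hQ' x hx)).add ((hΦd x).const_mul _)).add ((hE' x hx).const_mul _))
    (by
      intro x hx
      have hx0 : 0 < x := lt_of_le_of_lt ht hx.1
      have hxI : x ∈ Icc t (t + 1) := ⟨hx.1.le, hx.2.le⟩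
      obtain ⟨p1, p2, p3, -⟩ := aux_pow α (a x) ρ R hα (ha x) hρ1 hρR
      have hφ0 : 0 ≤ φ x := mul_nonneg (by linarith [hx.1]) (by linarith [hx.2])
      have hφ1 : φ x ≤ 1 := by
        simp only [φ]; nlinarith [hx.1, hx.2]
      have hnx := hnm x hxI
      set w := a x ^ (α + 2) with hw
      have hax := ha x
      have hn0 := hn x
      have hηx := hη0 x
      have hz0 : 0 ≤ a x ^ (α + 1) := Real.rpow_nonneg hax _
      have hww : 0 ≤ w := hw0 x
      -- term 1
      have t1 : (1 - 2 * (x - t)) * Q x ≤ P * m * (ρ + w / R) := by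
        calc (1 - 2 * (x - t)) * Q x ≤ |(1 - 2 * (x - t)) * Q x| := le_abs_self _
          _ = |1 - 2 * (x - t)| * |Q x| := abs_mul _ _
          _ ≤ 1 * (P * a x * n x) := by
              gcongr
              · rw [abs_le]; constructor <;> linarith [hx.1, hx.2]
              · exact hQb x
          _ = P * n x * a x := by ring
          _ ≤ P * m * (ρ + w / R) := by gcongr
      have t2 : φ x * Q' x + 2 * e * φ x ≤ 2 * (ρ ^ 2 + ρ * w / R) + c * P * (R + w / ρ) * m
          + P * m * (R / 2 + η x ^ 2 / (2 * R)) := by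
        have q1 := hQle x hx0
        have q2 := hlow x hxI
        have q3 : Q' x + 2 * e ≤ 2 * a x ^ 2 + c * P * a x ^ (α + 1) * n x + P * η x * n x := by
          rw [hE x] at q2
          linarith
        have q4 : φ x * (Q' x + 2 * e) ≤
            1 * (2 * a x ^ 2 + c * P * a x ^ (α + 1) * n x + P * η x * n x) := by
          refine (mul_le_mul_of_nonneg_left q3 hφ0).trans ?_
          gcongr
        have q5 : η x ≤ R / 2 + η x ^ 2 / (2 * R) := by
          have : R / 2 + η x ^ 2 / (2 * R) - η x = (R - η x) ^ 2 / (2 * R) := by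
            field_simp; ring
          have : 0 ≤ (R - η x) ^ 2 / (2 * R) := by positivity
          linarith
        have q6 : c * P * a x ^ (α + 1) * n x ≤ c * P * (R + w / ρ) * m := by gcongr
        have q7 : P * η x * n x ≤ P * m * (R / 2 + η x ^ 2 / (2 * R)) := by
          calc P * η x * n x = P * n x * η x := by ring
            _ ≤ _ := by gcongr
        linarith
      have t3 := mul_le_mul_of_nonneg_left (hpE x hx0) (by positivity : 0 ≤ k1 * (2 / c))
      have e3 : k1 * (2 / c) * (-(c / 2) * w + (c / 2 * (ρ * R) + ρ / (2 * c * R) * η x ^ 2))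
          = - (k1 * w) + k1 * (ρ * R) + k1 * (ρ / (c ^ 2 * R)) * η x ^ 2 := by
        field_simp; ring
      have e4 : k1 * w = P * m * (w / R) + 2 * (ρ * w / R) + c * P * m * (w / ρ) := by
        rw [hk1]; ring
      have e5 : P * m * (η x ^ 2 / (2 * R)) = P * m / (2 * R) * η x ^ 2 := by ring
      rw [e3] at t3
      linarith)
  have hk1R : k1 * (ρ * R) = P * m * ρ + 2 * ρ ^ 2 + c * P * m * R := by
    rw [hk1]; field_simp
  have hk1R' : k1 * (ρ * R) ≤ (1 + c) * P * m * R + 2 * R ^ 2 := by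
    rw [hk1R]
    have : P * m * ρ ≤ P * m * R := by gcongr
    have : ρ ^ 2 ≤ R ^ 2 := by gcongr
    linarith
  have hval : (fun x => φ x * Q x + 2 * e * Φ x + k1 * (2 / c) * E x) (t + 1)
      - (fun x => φ x * Q x + 2 * e * Φ x + k1 * (2 / c) * E x) t
      = e / 3 + k1 * (2 / c) * (E (t + 1) - E t) := by
    simp only [φ, Φ]; ring
  rw [hval] at key
  have hk1d : k1 * (2 / c) * (-1) ≤ k1 * (2 / c) * (E (t + 1) - E t) :=
    mul_le_mul_of_nonneg_left (by linarith) (by positivity)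
  have hρRge : 1 ≤ ρ * R := by nlinarith
  have hk1e : k1 * (2 / c) ≤ k1 * (ρ * R) * (2 / c) := by
    have : k1 * 1 ≤ k1 * (ρ * R) := mul_le_mul_of_nonneg_left hρRge hk10
    have h2c : 0 ≤ 2 / c := by positivity
    nlinarith
  have heq : (P * m / (2 * R) + k1 * (ρ / (c ^ 2 * R))) * R ^ 2
      = P * m * R / 2 + k1 * (ρ * R) * (1 / c ^ 2) := by field_simp
  rw [heq] at key
  have hfin : e / 3 ≤ ((1 + c) * P * m * R + 2 * R ^ 2) + P * m * R
      + κ * ((1 + c) * P * m * R + 2 * R ^ 2) := by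
    have := mul_le_mul_of_nonneg_left hk1R' hκ0.le
    have h8 : κ * (k1 * (ρ * R)) = k1 * (ρ * R) + k1 * (ρ * R) * (1 / c ^ 2)
      + k1 * (ρ * R) * (2 / c) := by rw [hκ]; ring
    linarith
  have hfin2 : e / 3 ≤ C5 * m * R + C6 * R ^ 2 := by
    rw [hC5, hC6]; linarith
  have hsq := sq_nonneg (m - 6 * C5 * R)
  have : C5 * m * R ≤ m ^ 2 / 12 + 3 * C5 ^ 2 * R ^ 2 := by nlinarith
  rw [hm2] at this
  rw [he] at hfin2
  linarith

lemma aux_limsup (E : ℝ → ℝ) (C1 C R2 : ℝ) (hC1 : 0 ≤ C1) (hC : 0 ≤ C) (hR : 0 ≤ R2)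
    (h0 : ∀ x, 0 ≤ E x)
    (h : ∀ t, 0 ≤ t → (∀ s ∈ Icc t (t + 1), E s ≤ E t + C1 * R2) ∧
        (E t - 1 ≤ E (t + 1) → E t ≤ C * R2)) :
    ∀ᶠ t in atTop, E t ≤ (C + 2 * C1) * R2 := by
  have hex : ∃ N : ℕ, E N ≤ C * R2 := by
    by_contra! hcon
    have : ∀ N : ℕ, E N ≤ E 0 - N := by
      intro N
      induction N with
      | zero => simp
      | succ k ih =>
        have := (h k (by positivity)).2
        have h2 := hcon k
        have : E (k + 1) < E k - 1 := by
          by_contra! h3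
          linarith [this h3]
        push_cast
        linarith
    obtain ⟨N, hN⟩ := exists_nat_gt (E 0)
    linarith [this N, h0 N]
  obtain ⟨N, hN⟩ := hex
  have hst : ∀ k : ℕ, E (N + k : ℕ) ≤ (C + C1) * R2 := by
    intro k
    have hp : 0 ≤ C1 * R2 := by positivity
    induction k with
    | zero => simp only [add_zero]; linarith
    | succ k ih =>
      obtain ⟨h1, h2⟩ := h (N + k : ℕ) (by positivity)
      have h3 := h1 ((N + k : ℕ) + 1) ⟨by linarith, le_rfl⟩
      rw [← add_assoc, Nat.cast_succ]
      by_cases hd : E (N + k : ℕ) - 1 ≤ E ((N + k : ℕ) + 1)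
      · have := h2 hd
        linarith
      · push Not at hd
        linarith
  filter_upwards [eventually_ge_atTop (N : ℝ)] with t ht
  have ht0 : 0 ≤ t := le_trans (by positivity) ht
  have hf : N ≤ ⌊t⌋₊ := Nat.le_floor ht
  have h1 := hst (⌊t⌋₊ - N)
  rw [Nat.add_sub_cancel' hf] at h1
  have h2 := (h ⌊t⌋₊ (by positivity)).1 t ⟨Nat.floor_le ht0, (Nat.lt_floor_add_one t).le⟩
  linarith


/-- The averaged damping `g(v) = c |j v|^α ι(j v)` (Example 2,
with `Z = H`) is continuous and monotone, satisfies
`⟨g(v), v⟩ = c |j v|^{α+2}` and `‖g(v)‖_{V'} ≤ c ‖j‖ |j v|^{α+1}`, and the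
ultimate bound of the energy of any strong solution is quadratic in the
`S²`-norm of the forcing term. -/
theorem stmt_9
    {V H : Type*}
    [NormedAddCommGroup V] [InnerProductSpace ℝ V] [CompleteSpace V]
    [NormedAddCommGroup H] [InnerProductSpace ℝ H] [CompleteSpace H]
    (j : V →L[ℝ] H) (hj_inj : Function.Injective j) (hj_dense : DenseRange j)
    (ι : H → (V →L[ℝ] ℝ)) (hι : ∀ (w : H) (v : V), ι w v = ⟪w, j v⟫)
    (A : V → (V →L[ℝ] ℝ)) (hA : ∀ u v : V, A u v = ⟪u, v⟫)
    (α : ℝ) (hα : 0 ≤ α) (c : ℝ) (hc : 0 < c)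
    (g : V → (V →L[ℝ] ℝ))
    (hg_def : ∀ v : V, g v = (c * ‖j v‖ ^ α) • ι (j v)) :
    Continuous g ∧
    (∀ v w : V, (g v - g w) (v - w) ≥ 0) ∧
    (∀ v : V, g v v = c * ‖j v‖ ^ (α + 2)) ∧
    (∀ v : V, ‖g v‖ ≤ c * ‖j‖ * ‖j v‖ ^ (α + 1)) ∧
    ∃ K' : ℝ, 0 < K' ∧
      ∀ h : ℝ → H, ContinuousOn h (Ici 0) →
        BddAbove {x : ℝ | ∃ t : ℝ, 0 ≤ t ∧ x = ∫ s in t..(t + 1), ‖h s‖ ^ 2} →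
        ∀ (u u' : ℝ → V) (u'' : ℝ → H),
          (∀ t ∈ Ici (0 : ℝ), HasDerivWithinAt u (u' t) (Ici 0) t) →
          ContinuousOn u' (Ici 0) →
          (∀ t ∈ Ici (0 : ℝ), HasDerivWithinAt (fun s => j (u' s)) (u'' t) (Ici 0) t) →
          ContinuousOn u'' (Ici 0) →
          (∀ t ∈ Ici (0 : ℝ), ι (u'' t) + A (u t) + g (u' t) = ι (h t)) →
          limsup (fun t : ℝ => ‖j (u' t)‖ ^ 2 + ‖u t‖ ^ 2) atTop ≤
            K' * (1 + Real.sqrt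
              (sSup {x : ℝ | ∃ t : ℝ, 0 ≤ t ∧ x = ∫ s in t..(t + 1), ‖h s‖ ^ 2}) ^ 2) := by
  have hιe : ∀ w, ι w = (innerSL ℝ w).comp j := by
    intro w; ext v; simp [hι]
  have hgv : ∀ v w, g v w = c * ‖j v‖ ^ α * ⟪j v, j w⟫ := by
    intro v w; rw [hg_def]; simp [hι]
  have hp2 : ∀ x : ℝ, 0 ≤ x → x ^ (α + 2) = x ^ α * x ^ 2 := by
    intro x hx
    rw [Real.rpow_add_of_nonneg hx hα (by norm_num)]; norm_num
  have hp1 : ∀ x : ℝ, 0 ≤ x → x ^ (α + 1) = x ^ α * x := by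
    intro x hx
    rw [Real.rpow_add_of_nonneg hx hα (by norm_num)]; norm_num
  refine ⟨?_, ?_, ?_, ?_, ?_⟩
  · have : g = fun v => (c * ‖j v‖ ^ α) • ((innerSL ℝ (j v)).comp j) := by
      funext v; rw [hg_def, hιe]
    rw [this]
    have h1 : Continuous fun v => ‖j v‖ ^ α :=
      (j.continuous.norm).rpow_const (fun _ => Or.inr hα)
    have h2 : Continuous fun v => (innerSL ℝ (j v)).comp j :=
      ((innerSL ℝ).continuous.comp j.continuous).clm_comp continuous_const
    exact (continuous_const.mul h1).smul h2
  · intro v w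
    have e : (g v - g w) (v - w) = c * (‖j v‖ ^ α * ‖j v‖ ^ 2 + ‖j w‖ ^ α * ‖j w‖ ^ 2
        - (‖j v‖ ^ α + ‖j w‖ ^ α) * ⟪j v, j w⟫) := by
      rw [ContinuousLinearMap.sub_apply, hgv, hgv, map_sub, inner_sub_right, inner_sub_right,
        real_inner_self_eq_norm_sq, real_inner_self_eq_norm_sq, real_inner_comm (j v) (j w)]
      ring
    rw [e]
    have hcs := real_inner_le_norm (j v) (j w)
    have hx := norm_nonneg (j v)
    have hy := norm_nonneg (j w)
    set x := ‖j v‖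
    set y := ‖j w‖
    have hxα : 0 ≤ x ^ α := Real.rpow_nonneg hx _
    have hyα : 0 ≤ y ^ α := Real.rpow_nonneg hy _
    have h1 := mul_le_mul_of_nonneg_left hcs (add_nonneg hxα hyα)
    have h2 : 0 ≤ (x ^ α * x - y ^ α * y) * (x - y) := by
      rcases le_total x y with h | h
      · have := Real.rpow_le_rpow hx h hα
        have : x ^ α * x ≤ y ^ α * y := by gcongr
        nlinarith
      · have := Real.rpow_le_rpow hy h hα
        have : y ^ α * y ≤ x ^ α * x := by gcongr
        nlinarith
    apply mul_nonneg hc.le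
    nlinarith
  · intro v
    rw [hgv, real_inner_self_eq_norm_sq, hp2 _ (norm_nonneg _)]; ring
  · intro v
    have hxα : 0 ≤ ‖j v‖ ^ α := Real.rpow_nonneg (norm_nonneg _) _
    refine ContinuousLinearMap.opNorm_le_bound _ (by positivity) fun w => ?_
    rw [hgv, hp1 _ (norm_nonneg _), Real.norm_eq_abs, abs_mul, abs_of_nonneg (by positivity)]
    calc c * ‖j v‖ ^ α * |⟪j v, j w⟫| ≤ c * ‖j v‖ ^ α * (‖j v‖ * (‖j‖ * ‖w‖)) := by
          gcongr
          exact (abs_real_inner_le_norm _ _).trans (by gcongr; exact j.le_opNorm w)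
      _ = _ := by ring
  · obtain ⟨C1, C, hC1, hC, hwin⟩ := aux_window α c ‖j‖ hα hc (norm_nonneg _)
    refine ⟨2 * (C + 2 * C1) + 1, by positivity, ?_⟩
    intro h hh hbdd u u' u'' hu hu' hju hu'' heq
    set S := sSup {x : ℝ | ∃ t : ℝ, 0 ≤ t ∧ x = ∫ s in t..(t + 1), ‖h s‖ ^ 2} with hS
    have hSle : ∀ t, 0 ≤ t → ∫ s in t..(t + 1), ‖h s‖ ^ 2 ≤ S := fun t ht =>
      le_csSup hbdd ⟨t, ht, rfl⟩
    have hS0 : 0 ≤ S := le_trans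
      (intervalIntegral.integral_nonneg (by norm_num) fun x _ => by positivity) (hSle 0 le_rfl)
    rw [Real.sq_sqrt hS0]
    have hR2 : Real.sqrt (1 + S) ^ 2 = 1 + S := Real.sq_sqrt (by linarith)
    have hud : ∀ x, 0 < x → HasDerivAt u (u' x) x := fun x hx =>
      (hu x hx.le).hasDerivAt (Ici_mem_nhds hx)
    have hvd : ∀ x, 0 < x → HasDerivAt (fun s => j (u' s)) (u'' x) x := fun x hx =>
      (hju x hx.le).hasDerivAt (Ici_mem_nhds hx)
    have huc : ContinuousOn u (Ici 0) := fun x hx => (hu x hx).continuousWithinAt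
    have hvc : ContinuousOn (fun s => j (u' s)) (Ici 0) := fun x hx =>
      (hju x hx).continuousWithinAt
    have hjuc : ContinuousOn (fun s => j (u s)) (Ici 0) := j.continuous.comp_continuousOn huc
    have heqv : ∀ x, 0 ≤ x → ∀ w, ⟪u'' x, j w⟫ = ⟪h x, j w⟫ - ⟪u x, w⟫
        - c * ‖j (u' x)‖ ^ α * ⟪j (u' x), j w⟫ := by
      intro x hx w
      have := congrArg (fun f : V →L[ℝ] ℝ => f w) (heq x hx)
      simp only [ContinuousLinearMap.add_apply, hι, hA, hgv] at this
      linarith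
    have hev := aux_limsup (fun x => (‖j (u' x)‖ ^ 2 + ‖u x‖ ^ 2) / 2) C1 C (1 + S) hC1 hC
      (by linarith) (fun x => by positivity) (by
        rw [← hR2]
        refine hwin (fun x => ‖j (u' x)‖) (fun x => ‖u x‖) (fun x => ‖h x‖) _
          (fun x => ⟪u'' x, j (u' x)⟫ + ⟪u x, u' x⟫)
          (fun x => ⟪j (u' x), j (u x)⟫)
          (fun x => ⟪j (u' x), j (u' x)⟫ + ⟪u'' x, j (u x)⟫)
          (Real.sqrt (1 + S)) (Real.one_le_sqrt.2 (by linarith))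
          (fun _ => norm_nonneg _) (fun _ => norm_nonneg _) (fun _ => norm_nonneg _)
          (fun _ => rfl) hh.norm (((hvc.norm.pow 2).add (huc.norm.pow 2)).div_const 2)
          (hvc.inner hjuc) ?_ ?_ ?_ ?_ ?_ ?_
        · intro t ht
          rw [hR2]
          linarith [hSle t ht]
        · intro x hx
          have := (((hvd x hx).norm_sq).add ((hud x hx).norm_sq)).div_const 2
          refine this.congr_deriv ?_
          rw [real_inner_comm (u'' x)]
          ring
        · intro x hx
          exact ((hvd x hx).inner ℝ (j.hasFDerivAt.comp_hasDerivAt x (hud x hx)))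
        · intro x hx
          rw [heqv x hx.le, real_inner_self_eq_norm_sq, hp2 _ (norm_nonneg _)]
          have := real_inner_le_norm (h x) (j (u' x))
          linarith
        · intro x hx
          rw [heqv x hx.le, real_inner_self_eq_norm_sq, real_inner_self_eq_norm_sq,
            hp1 _ (norm_nonneg _)]
          have hju := j.le_opNorm (u x)
          have h1 : ⟪h x, j (u x)⟫ ≤ ‖j‖ * ‖h x‖ * ‖u x‖ := by
            refine (real_inner_le_norm _ _).trans ?_
            calc ‖h x‖ * ‖j (u x)‖ ≤ ‖h x‖ * (‖j‖ * ‖u x‖) := by gcongr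
              _ = _ := by ring
          have h2 : -⟪j (u' x), j (u x)⟫ ≤ ‖j (u' x)‖ * (‖j‖ * ‖u x‖) := by
            refine (neg_le_abs _).trans ((abs_real_inner_le_norm _ _).trans ?_)
            gcongr
          have h3 := mul_le_mul_of_nonneg_left h2
            (mul_nonneg hc.le (Real.rpow_nonneg (norm_nonneg (j (u' x))) α))
          linarith
        · intro x
          refine (abs_real_inner_le_norm _ _).trans ?_
          calc ‖j (u' x)‖ * ‖j (u x)‖ ≤ ‖j (u' x)‖ * (‖j‖ * ‖u x‖) := by
                gcongr; exact j.le_opNorm _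
            _ = _ := by ring)
    refine limsup_le_of_le ?_ ?_
    · exact isCoboundedUnder_le_of_le atTop (x := 0) (fun x => by positivity)
    · filter_upwards [hev] with t ht
      linarith
end
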